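/- Let h ∈ ℤ_{≥0} and let (b_a)_{a∈A_h} be a family of elements of E. Then sup_{a∈A_h} |b_a| ≤ ‖Σ_{a∈A_h} b_a·e_{a,0,r}‖_{C^r} · q^r, where 0 denotes the zero multi-index. -/

import Mathlib

/-!
Setting (cf. the paper's notations): `O` plays the role of the ring of integers `𝒪_F` of a
finite extension `F` of `ℚ_p`, `E` is the coefficient field (a finite extension of `ℚ_p`
with its p-adic absolute value, normalized by `|x| = p^{-val_F(x)}`, `val_F(p) = [F:ℚ_p]`),
`S` is the (finite) set of `ℚ_p`-algebra embeddings `F ↪ E`, restricted here to `O`,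
`ν : O → ℝ` is the absolute value on `O` (the common restriction of the norm of `E` along any
embedding), `ϖ` is a fixed uniformizer with `ν ϖ = q⁻¹` where `q = p^f` is the cardinality
of the residue field, and `u * ϖ ^ e = p` records the ramification index `e`.
-/

open scoped Classical

noncomputable section

namespace CrPaper

structure Setting (S O E : Type*) [Fintype S] [CommRing O] [NormedField E] where
  q : ℝ
  p : ℕ
  fdeg : ℕ
  hp : p.Prime
  hfdeg : 0 < fdeg
  hq : q = (p : ℝ) ^ fdeg
  emb : S → O →+* E
  emb_inj : ∀ s, Function.Injective (emb s)
  emb_distinct : Function.Injective emb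
  ν : O → ℝ
  norm_emb : ∀ (s) (z : O), ‖emb s z‖ = ν z
  norm_le_one : ∀ (s) (z : O), ‖emb s z‖ ≤ 1
  norm_add_max : ∀ x y : E, ‖x + y‖ ≤ max ‖x‖ ‖y‖
  ϖ : O
  ν_ϖ : ν ϖ = q⁻¹
  mem_ball_iff : ∀ (y : O) (n : ℕ), (∃ z, y = ϖ ^ n * z) ↔ ν y ≤ q⁻¹ ^ n
  ram : ∃ (e : ℕ) (u : O), 0 < e ∧ IsUnit u ∧ u * ϖ ^ e = (p : O)

variable {S O E : Type*} [Fintype S] [DecidableEq S] [CommRing O] [IsDomain O]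
  [NormedField E] [CompleteSpace E] [CharZero E]

/-- The total weight `|i| = ∑ i_σ` of a multi-index. -/
def wt (i : S → ℕ) : ℕ := ∑ s, i s

/-- `i! = ∏ i_σ!` for a multi-index. -/
def mfact (i : S → ℕ) : ℕ := ∏ s, (i s).factorial

/-- The (finite) set `I_{≤N}` of multi-indices of total weight `≤ N`. -/
def Idx (S : Type*) [Fintype S] [DecidableEq S] (N : ℕ) : Finset (S → ℕ) :=
  (Fintype.piFinset fun _ : S => Finset.range (N + 1)).filter fun i => wt i ≤ N

/-- `z^i = ∏_σ σ(z)^{i_σ}`. -/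
def mpow (St : Setting S O E) (z : O) (i : S → ℕ) : E := ∏ s, St.emb s z ^ i s

/-- The Taylor remainder `ε_{f,N}(x,y) = f(x+y) − ∑_{|i|≤N} D_i f(x) y^i / i!`. -/
def epsTay (St : Setting S O E) (N : ℕ) (f : O → E) (D : (S → ℕ) → O → E) (x y : O) : E :=
  f (x + y) - ∑ i ∈ Idx S N, D i x * mpow St y i / (mfact i : E)

/-- `f` is of class `C^r` with the family of bounded functions `D` witnessing the
definition: all `D_i` (`|i| ≤ ⌊r⌋`) are bounded and
`C_{f,r}(h) = sup_{x ∈ O, y ∈ ϖ^h O} |ε_{f,⌊r⌋}(x,y)| q^{rh} → 0` as `h → ∞`. -/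
def IsCrWith (St : Setting S O E) (r : ℝ) (f : O → E) (D : (S → ℕ) → O → E) : Prop :=
  (∀ i ∈ Idx S ⌊r⌋₊, ∃ C : ℝ, ∀ x : O, ‖D i x‖ ≤ C) ∧
  ∀ ε : ℝ, 0 < ε → ∃ M : ℕ, ∀ h : ℕ, M ≤ h → ∀ x z : O,
    ‖epsTay St ⌊r⌋₊ f D x (St.ϖ ^ h * z)‖ * St.q ^ (r * (h : ℝ)) ≤ ε

/-- `f` is of class `C^r`. -/
def IsCr (St : Setting S O E) (r : ℝ) (f : O → E) : Prop :=
  ∃ D, IsCrWith St r f D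

/-- The `C^r`-norm of `f` (relative to the — unique — family `D`):
`max( sup_{i,x} |D_i f(x)/i!| , sup_{x,y} |ε_{f,⌊r⌋}(x,y)|/|y|^r )`. -/
def CrNorm (St : Setting S O E) (r : ℝ) (f : O → E) (D : (S → ℕ) → O → E) : ℝ :=
  max (⨆ i : (Idx S ⌊r⌋₊), ⨆ x : O, ‖D i.1 x / (mfact i.1 : E)‖)
      (⨆ x : O, ⨆ y : O, ‖epsTay St ⌊r⌋₊ f D x y‖ / St.ν y ^ r)

/-- A compatible system of representatives `A_h` of `O/ϖ^h O` with `A_0 = {0}` and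
`A_h ⊆ A_{h+1}`. -/
structure RepSystem (St : Setting S O E) where
  A : ℕ → Finset O
  hA0 : A 0 = {0}
  hmono : ∀ h : ℕ, A h ⊆ A (h + 1)
  hrep : ∀ (h : ℕ) (z : O), ∃! a : O, a ∈ A h ∧ ∃ y : O, z = a + St.ϖ ^ h * y

/-- `A = ⋃_h A_h`. -/
def Aall (St : Setting S O E) (R : RepSystem St) : Set O := ⋃ h : ℕ, (R.A h : Set O)

/-- `l(a)`: the smallest `n` with `a ∈ A_n`. -/
def lA (St : Setting S O E) (R : RepSystem St) (a : O) : ℕ := sInf {n : ℕ | a ∈ R.A n}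

/-- The function `z ↦ 1_{a+ϖ^n O}(z) ((z−a)/ϖ^n)^i` : it takes the value `y^i` at
`z = a + ϖ^n y` and `0` outside the coset `a + ϖ^n O`. -/
def coeval (St : Setting S O E) (a : O) (n : ℕ) (i : S → ℕ) : O → E := fun z =>
  if hz : ∃ y : O, z = a + St.ϖ ^ n * y then mpow St hz.choose i else 0

/-- The function `e_{a,i,r}(z) = ρ(ϖ)^{[l(a)r]} 1_{a+ϖ^{l(a)}O}(z) ((z−a)/ϖ^{l(a)})^i`. -/
def ebasis (St : Setting S O E) (R : RepSystem St) (ρ : O →+* E) (r : ℝ) (a : O)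
    (i : S → ℕ) : O → E := fun z =>
  ρ St.ϖ ^ ⌊(lA St R a : ℝ) * r⌋₊ * coeval St a (lA St R a) i z

/-!
If `f` is constant modulo `ϖ ^ h`, the nonconstant part of its Taylor polynomial vanishes: along
the sequence `ϖ ^ k * y` it is an exponential sum in the numbers `ϖ^i`, `0 < |i| ≤ r`, and it is
eventually the negative of the Taylor remainder, hence `o(q^{-rk})`, although every `ϖ^i` has
absolute value at least `q^{-r}`. So `ε_f(x, y) = f (x + y) - f x`, and the `C^r`-norm of `f`
controls both `|f x|` and `|f x - f y| q^{rn}` for `x ≡ y` modulo `ϖ ^ n`.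

Apply this to `f = ∑_{c ∈ A_h} b_c e_{c,0,r}`. If `l(a) = 0`, then `f a = b_a`. If `l(a) = n + 1`,
let `a' ∈ A_n` be the representative of `a` modulo `ϖ ^ n`; only the term of `a` contributes to
`f a - f a'`, which is therefore `b_a ρ(ϖ)^{[(n+1)r]}`. The factor `q ^ r` is the loss from
comparing the levels `n` and `n + 1`.
-/

section ExponentialSums

open Asymptotics Filter

variable {K : Type*} [NormedField K] {t : ℝ}

theorem eq_zero_of_mul_pow_isLittleO_pow (ht : 0 < t) {c x : K} (hx : t ≤ ‖x‖)
    (h : (fun k : ℕ => c * x ^ k) =o[atTop] fun k => t ^ k) : c = 0 := by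
  by_contra hc
  have hle : (fun k : ℕ => t ^ k) =O[atTop] fun k => x ^ k :=
    IsBigO.of_bound' <| Eventually.of_forall fun k => by
      rw [norm_pow, norm_pow, Real.norm_of_nonneg ht.le]
      gcongr
  have hself := (hle.trans (isBigO_self_const_mul hc _ _)).trans_isLittleO h
  exact isLittleO_irrefl (Frequently.of_forall fun k => (pow_pos ht k).ne') hself

/-- The operator `u ↦ (k ↦ u (k + 1) - x j * u k)` preserves `o(t ^ k)` and kills the `j`-th
term, which is the induction step. -/
theorem sum_mul_pow_eq_zero_of_isLittleO_pow {ι : Type*} (ht : 0 < t) (s : Finset ι) {x : ι → K}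
    (hx : ∀ i ∈ s, t ≤ ‖x i‖) (c : ι → K)
    (h : (fun k : ℕ => ∑ i ∈ s, c i * x i ^ k) =o[atTop] fun k => t ^ k) (k : ℕ) :
    ∑ i ∈ s, c i * x i ^ k = 0 := by
  induction s using Finset.induction_on generalizing c k with
  | empty => exact Finset.sum_empty
  | insert j s hj ih =>
    set u : ℕ → K := fun k => ∑ i ∈ insert j s, c i * x i ^ k with hu
    have hdiff (k : ℕ) :
        u (k + 1) - x j * u k = ∑ i ∈ s, c i * (x i - x j) * x i ^ k := by
      simp only [hu, Finset.sum_insert hj, mul_add, Finset.mul_sum]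
      rw [add_sub_add_comm, ← Finset.sum_sub_distrib]
      have hcancel : c j * x j ^ (k + 1) - x j * (c j * x j ^ k) = 0 := by ring
      rw [hcancel, zero_add]
      exact Finset.sum_congr rfl fun i _ => by ring
    have hshift : (fun k => u (k + 1)) =o[atTop] fun k => t ^ k := by
      refine (h.comp_tendsto (tendsto_add_atTop_nat 1)).trans_isBigO ?_
      simpa only [Function.comp_def, pow_succ'] using isBigO_const_mul_self t (t ^ ·) atTop
    have hrec (k : ℕ) : u (k + 1) = x j * u k := by
      refine sub_eq_zero.1 ((hdiff k).trans ?_)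
      refine ih (fun i hi => hx i (Finset.mem_insert_of_mem hi)) _ ?_ k
      simpa only [← hdiff] using hshift.sub (h.const_mul_left (x j))
    have hgeom (k : ℕ) : u k = u 0 * x j ^ k := by
      induction k with
      | zero => rw [pow_zero, mul_one]
      | succ k ihk => rw [hrec, ihk]; ring
    have hzero : u 0 = 0 :=
      eq_zero_of_mul_pow_isLittleO_pow ht (hx j (Finset.mem_insert_self j s))
        (by simpa only [← hgeom] using h)
    exact (hgeom k).trans (by rw [hzero, zero_mul])

end ExponentialSums

theorem le_mul_rpow_of_mul_inv_pow_floor_le {q x C r : ℝ} (hq : 1 < q) (hr : 0 ≤ r) (hx : 0 ≤ x)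
    {n : ℕ} (h : x * q⁻¹ ^ ⌊((n + 1 : ℕ) : ℝ) * r⌋₊ ≤ C * q ^ (-(r * n))) : x ≤ C * q ^ r := by
  have hq0 : 0 < q := one_pos.trans hq
  have hfloor : q ^ (-(r * (n + 1))) ≤ q⁻¹ ^ ⌊((n + 1 : ℕ) : ℝ) * r⌋₊ := by
    rw [← Real.rpow_natCast, Real.inv_rpow hq0.le, ← Real.rpow_neg hq0.le]
    have hle := Nat.floor_le (a := ((n + 1 : ℕ) : ℝ) * r) (by positivity)
    push_cast at hle ⊢
    exact Real.rpow_le_rpow_of_exponent_le hq.le (by linarith)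
  refine le_of_mul_le_mul_right ?_ (Real.rpow_pos_of_pos hq0 (-(r * (n + 1))))
  calc x * q ^ (-(r * (n + 1))) ≤ x * q⁻¹ ^ ⌊((n + 1 : ℕ) : ℝ) * r⌋₊ := by gcongr
    _ ≤ C * q ^ (-(r * n)) := h
    _ = C * q ^ r * q ^ (-(r * (n + 1))) := by
      rw [mul_assoc, ← Real.rpow_add hq0]
      ring_nf

section Cosets

omit [DecidableEq S] [IsDomain O] [CompleteSpace E] [CharZero E]

variable {St : Setting S O E} {R : RepSystem St}

namespace Setting

theorem one_lt_q (St : Setting S O E) : 1 < St.q := by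
  rw [St.hq]
  exact one_lt_pow₀ (by exact_mod_cast St.hp.one_lt) St.hfdeg.ne'

theorem q_pos (St : Setting S O E) : 0 < St.q := one_pos.trans St.one_lt_q

theorem pow_ϖ_dvd_iff {y : O} {n : ℕ} : St.ϖ ^ n ∣ y ↔ St.ν y ≤ St.q⁻¹ ^ n :=
  St.mem_ball_iff y n

end Setting

theorem mpow_zero (z : O) : mpow St z 0 = 1 := by simp [mpow]

theorem zero_mpow {i : S → ℕ} (hi : i ≠ 0) : mpow St 0 i = 0 := by
  obtain ⟨s, hs⟩ := Function.ne_iff.1 hi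
  exact Finset.prod_eq_zero (Finset.mem_univ s) (by simpa using hs)

theorem mul_mpow (y z : O) (i : S → ℕ) : mpow St (y * z) i = mpow St y i * mpow St z i := by
  simp only [mpow, map_mul, mul_pow, Finset.prod_mul_distrib]

theorem pow_mpow (y : O) (k : ℕ) (i : S → ℕ) : mpow St (y ^ k) i = mpow St y i ^ k := by
  simp only [mpow, map_pow, ← Finset.prod_pow, pow_right_comm]

theorem norm_mpow_ϖ (i : S → ℕ) : ‖mpow St St.ϖ i‖ = St.q⁻¹ ^ wt i := by
  simp only [mpow, norm_prod, norm_pow, St.norm_emb, St.ν_ϖ, wt, Finset.prod_pow_eq_pow_sum]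

/-- The functions `𝒪_F → E` that factor through `𝒪_F / ϖ ^ n 𝒪_F`. -/
def IsConstModPow (St : Setting S O E) (n : ℕ) (f : O → E) : Prop :=
  ∀ ⦃x y : O⦄, St.ϖ ^ n ∣ x - y → f x = f y

theorem IsConstModPow.mono {m n : ℕ} (hmn : m ≤ n) {f : O → E} (hf : IsConstModPow St m f) :
    IsConstModPow St n f :=
  fun _ _ hxy => hf ((pow_dvd_pow _ hmn).trans hxy)

theorem IsConstModPow.const_mul {n : ℕ} {f : O → E} (hf : IsConstModPow St n f) (c : E) :
    IsConstModPow St n fun z => c * f z :=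
  fun _ _ hxy => congrArg (c * ·) (hf hxy)

theorem IsConstModPow.sum {ι : Type*} {s : Finset ι} {n : ℕ} {f : ι → O → E}
    (hf : ∀ i ∈ s, IsConstModPow St n (f i)) : IsConstModPow St n fun z => ∑ i ∈ s, f i z :=
  fun _ _ hxy => Finset.sum_congr rfl fun i hi => hf i hi hxy

theorem coeval_zero (a : O) (n : ℕ) (z : O) :
    coeval St a n 0 z = if St.ϖ ^ n ∣ z - a then 1 else 0 := by
  simp only [coeval, mpow_zero, dite_eq_ite, ← sub_eq_iff_eq_add', Dvd.dvd]

theorem isConstModPow_coeval_zero (a : O) (n : ℕ) :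
    IsConstModPow St n (coeval St a n 0) := by
  intro x y hxy
  rw [coeval_zero, coeval_zero, ← sub_add_sub_cancel x y a]
  simp only [dvd_add_right hxy]

namespace RepSystem

theorem monotone_A : Monotone R.A := monotone_nat_of_le_succ R.hmono

theorem mem_A_lA {a : O} {n : ℕ} (ha : a ∈ R.A n) : a ∈ R.A (lA St R a) :=
  Nat.sInf_mem (s := {n | a ∈ R.A n}) ⟨n, ha⟩

theorem lA_le {a : O} {n : ℕ} (ha : a ∈ R.A n) : lA St R a ≤ n := Nat.sInf_le ha

theorem exists_mem_A_dvd_sub (n : ℕ) (z : O) : ∃ a ∈ R.A n, St.ϖ ^ n ∣ z - a := by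
  obtain ⟨a, ⟨ha, y, hy⟩, -⟩ := R.hrep n z
  exact ⟨a, ha, y, sub_eq_of_eq_add' hy⟩

theorem eq_of_dvd_sub {a c : O} {n : ℕ} (ha : a ∈ R.A n) (hc : c ∈ R.A n)
    (hac : St.ϖ ^ n ∣ a - c) : a = c := by
  obtain ⟨y, hy⟩ := hac
  exact (R.hrep n a).unique ⟨ha, 0, by rw [mul_zero, add_zero]⟩ ⟨hc, y, eq_add_of_sub_eq' hy⟩

end RepSystem

variable {ρ : O →+* E} {r : ℝ}

theorem isConstModPow_ebasis_zero (a : O) :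
    IsConstModPow St (lA St R a) (ebasis St R ρ r a 0) :=
  (isConstModPow_coeval_zero a _).const_mul _

theorem ebasis_zero_self (a : O) : ebasis St R ρ r a 0 a = ρ St.ϖ ^ ⌊(lA St R a : ℝ) * r⌋₊ := by
  simp only [ebasis, coeval_zero, sub_self, dvd_zero, if_true, mul_one]

theorem ebasis_zero_eq_zero {a c : O} {m n : ℕ} (hc : c ∈ R.A m) (ha : a ∈ R.A n)
    (hn : n ≤ lA St R c) (hne : a ≠ c) : ebasis St R ρ r c 0 a = 0 := by
  have hdvd : ¬ St.ϖ ^ lA St R c ∣ a - c := fun hac =>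
    hne (R.eq_of_dvd_sub (R.monotone_A hn ha) (R.mem_A_lA hc) hac)
  simp only [ebasis, coeval_zero, if_neg hdvd, mul_zero]

/-- The expansion `∑_{a ∈ A_h} b_a e_{a,0,r}` of degree zero and level `h`. -/
def ebasisSum (St : Setting S O E) (R : RepSystem St) (ρ : O →+* E) (r : ℝ) (h : ℕ)
    (b : O → E) : O → E :=
  fun z => ∑ a ∈ R.A h, b a * ebasis St R ρ r a 0 z

variable {h : ℕ} {a : O}

theorem isConstModPow_ebasisSum (b : O → E) : IsConstModPow St h (ebasisSum St R ρ r h b) :=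
  IsConstModPow.sum fun a ha => ((isConstModPow_ebasis_zero a).mono (R.lA_le ha)).const_mul (b a)

theorem ebasisSum_apply_of_lA_eq_zero (ha : a ∈ R.A h) (hla : lA St R a = 0) (b : O → E) :
    ebasisSum St R ρ r h b a = b a := by
  rw [ebasisSum, Finset.sum_eq_single_of_mem a ha, ebasis_zero_self, hla, Nat.cast_zero, zero_mul,
    Nat.floor_zero, pow_zero, mul_one]
  intro c hc hca
  rw [ebasis_zero_eq_zero hc (R.mem_A_lA ha) (hla.trans_le (Nat.zero_le _)) hca.symm, mul_zero]

/-- Terms of level at most `n` agree at `a` and `a'`, while those of level above `n` vanish at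
both points, with the exception of the term of `a` at `a`. -/
theorem ebasisSum_sub_of_lA_eq_succ (ha : a ∈ R.A h) {n : ℕ} (hla : lA St R a = n + 1) {a' : O}
    (ha' : a' ∈ R.A n) (hdvd : St.ϖ ^ n ∣ a - a') (b : O → E) :
    ebasisSum St R ρ r h b a - ebasisSum St R ρ r h b a' =
      b a * ρ St.ϖ ^ ⌊((n + 1 : ℕ) : ℝ) * r⌋₊ := by
  have hvanish {c : O} (hc : c ∈ R.A h) (hnc : n < lA St R c) : ebasis St R ρ r c 0 a' = 0 :=
    ebasis_zero_eq_zero hc ha' hnc.le fun hac => hnc.not_ge (hac ▸ R.lA_le ha')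
  simp only [ebasisSum, ← Finset.sum_sub_distrib]
  rw [Finset.sum_eq_single_of_mem a ha, ebasis_zero_self, hvanish ha (by omega), hla, mul_zero,
    sub_zero]
  intro c hc hca
  rcases le_or_gt (lA St R c) n with hcn | hnc
  · rw [(isConstModPow_ebasis_zero c).mono hcn hdvd, sub_self]
  · have hac : ebasis St R ρ r c 0 a = 0 :=
      ebasis_zero_eq_zero hc (R.mem_A_lA ha) (hla.trans_le hnc) hca.symm
    rw [hac, hvanish hc hnc, sub_self]

end Cosets

section CrNorm

omit [IsDomain O] [CompleteSpace E] [CharZero E]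

open Asymptotics Filter

variable {St : Setting S O E} {f : O → E} {D : (S → ℕ) → O → E} {r : ℝ} {h : ℕ}

theorem zero_mem_Idx (N : ℕ) : (0 : S → ℕ) ∈ Idx S N := by
  rw [Idx, Finset.mem_filter]
  simp [wt]

theorem wt_le_of_mem_Idx {N : ℕ} {i : S → ℕ} (hi : i ∈ Idx S N) : wt i ≤ N :=
  (Finset.mem_filter.1 hi).2

theorem epsTay_eq_sub_sum_erase (N : ℕ) (f : O → E) (D : (S → ℕ) → O → E) (x y : O) :
    epsTay St N f D x y =
      f (x + y) - D 0 x - ∑ i ∈ (Idx S N).erase 0, D i x * mpow St y i / (mfact i : E) := by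
  rw [epsTay, ← Finset.add_sum_erase _ _ (zero_mem_Idx N), ← sub_sub]
  simp [mpow_zero, mfact]

theorem epsTay_zero_right (N : ℕ) (f : O → E) (D : (S → ℕ) → O → E) (x : O) :
    epsTay St N f D x 0 = f x - D 0 x := by
  rw [epsTay_eq_sub_sum_erase, add_zero, Finset.sum_eq_zero, sub_zero]
  intro i hi
  rw [zero_mpow (Finset.ne_of_mem_erase hi), mul_zero, zero_div]

namespace IsCrWith

theorem isLittleO_epsTay (hD : IsCrWith St r f D) (x y : O) :
    (fun k : ℕ => epsTay St ⌊r⌋₊ f D x (St.ϖ ^ k * y)) =o[atTop]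
      fun k => (St.q ^ (-r)) ^ k := by
  refine IsLittleO.of_bound fun ε hε => ?_
  obtain ⟨M, hM⟩ := hD.2 ε hε
  filter_upwards [eventually_ge_atTop M] with k hk
  have hpow : (St.q ^ (-r)) ^ k = (St.q ^ (r * k))⁻¹ := by
    rw [← Real.rpow_natCast, ← Real.rpow_mul St.q_pos.le, neg_mul, Real.rpow_neg St.q_pos.le]
  have hpos : 0 < St.q ^ (r * k) := Real.rpow_pos_of_pos St.q_pos _
  rw [hpow, Real.norm_of_nonneg (inv_pos.2 hpos).le, ← div_eq_mul_inv, le_div_iff₀ hpos]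
  exact hM k hk x y

theorem D_zero (hD : IsCrWith St r f D) (hr : 0 ≤ r) (x : O) : D 0 x = f x := by
  have hlittle := hD.isLittleO_epsTay x 0
  simp only [mul_zero, epsTay_zero_right] at hlittle
  refine (sub_eq_zero.1 (eq_zero_of_mul_pow_isLittleO_pow (x := (1 : E))
    (Real.rpow_pos_of_pos St.q_pos (-r)) ?_ ?_)).symm
  · rw [norm_one]
    exact Real.rpow_le_one_of_one_le_of_nonpos St.one_lt_q.le (neg_nonpos.2 hr)
  · simpa only [one_pow, mul_one] using hlittle

theorem epsTay_eq_sub (hD : IsCrWith St r f D) (hr : 0 ≤ r) (hf : IsConstModPow St h f)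
    (x y : O) : epsTay St ⌊r⌋₊ f D x y = f (x + y) - f x := by
  set s := (Idx S ⌊r⌋₊).erase 0
  set c : (S → ℕ) → E := fun i => D i x * mpow St y i / (mfact i : E) with hc
  have hsum (k : ℕ) : ∑ i ∈ s, D i x * mpow St (St.ϖ ^ k * y) i / (mfact i : E) =
      ∑ i ∈ s, c i * mpow St St.ϖ i ^ k :=
    Finset.sum_congr rfl fun i _ => by rw [mul_mpow, pow_mpow, hc]; ring
  have hnorm : ∀ i ∈ s, St.q ^ (-r) ≤ ‖mpow St St.ϖ i‖ := by
    intro i hi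
    rw [norm_mpow_ϖ, ← Real.rpow_natCast, Real.inv_rpow St.q_pos.le, ← Real.rpow_neg St.q_pos.le]
    refine Real.rpow_le_rpow_of_exponent_le St.one_lt_q.le (neg_le_neg ?_)
    exact (Nat.cast_le.2 (wt_le_of_mem_Idx (Finset.mem_of_mem_erase hi))).trans (Nat.floor_le hr)
  have hlittle : (fun k : ℕ => ∑ i ∈ s, c i * mpow St St.ϖ i ^ k) =o[atTop]
      fun k => (St.q ^ (-r)) ^ k := by
    refine (hD.isLittleO_epsTay x y).neg_left.congr' ?_ EventuallyEq.rfl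
    filter_upwards [eventually_ge_atTop h] with k hk
    have hconst : f (x + St.ϖ ^ k * y) = f x :=
      hf.mono hk (by rw [add_sub_cancel_left]; exact dvd_mul_right _ _)
    rw [epsTay_eq_sub_sum_erase, hD.D_zero hr, hconst, sub_self, zero_sub, neg_neg, hsum]
  have hvanish := sum_mul_pow_eq_zero_of_isLittleO_pow
    (Real.rpow_pos_of_pos St.q_pos (-r)) s hnorm c hlittle 0
  rw [← hsum, pow_zero, one_mul] at hvanish
  rw [epsTay_eq_sub_sum_erase, hvanish, hD.D_zero hr, sub_zero]

theorem norm_le_crNorm (hD : IsCrWith St r f D) (hr : 0 ≤ r) (x : O) :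
    ‖f x‖ ≤ CrNorm St r f D := by
  obtain ⟨B, hB⟩ := hD.1 0 (zero_mem_Idx _)
  have hterm (x : O) : ‖D 0 x / (mfact (0 : S → ℕ) : E)‖ = ‖D 0 x‖ := by simp [mfact]
  have hbdd : BddAbove (Set.range fun x => ‖D 0 x / (mfact (0 : S → ℕ) : E)‖) :=
    ⟨B, Set.forall_mem_range.2 fun x => (hterm x).trans_le (hB x)⟩
  calc ‖f x‖ = ‖D 0 x / (mfact (0 : S → ℕ) : E)‖ := by rw [hterm, hD.D_zero hr]
    _ ≤ ⨆ x, ‖D 0 x / (mfact (0 : S → ℕ) : E)‖ := le_ciSup hbdd x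
    _ ≤ ⨆ i : Idx S ⌊r⌋₊, ⨆ x, ‖D i.1 x / (mfact i.1 : E)‖ :=
      le_ciSup (f := fun i : Idx S ⌊r⌋₊ => ⨆ x, ‖D i.1 x / (mfact i.1 : E)‖)
        (Set.finite_range _).bddAbove ⟨0, zero_mem_Idx _⟩
    _ ≤ CrNorm St r f D := le_max_left _ _

theorem crNorm_nonneg (hD : IsCrWith St r f D) (hr : 0 ≤ r) : 0 ≤ CrNorm St r f D :=
  (norm_nonneg _).trans (hD.norm_le_crNorm hr 0)

theorem norm_epsTay_div_le (hD : IsCrWith St r f D) (hr : 0 ≤ r) (hf : IsConstModPow St h f)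
    (x y : O) :
    ‖epsTay St ⌊r⌋₊ f D x y‖ / St.ν y ^ r ≤ (2 * CrNorm St r f D) / (St.q⁻¹ ^ h) ^ r := by
  have hq := St.q_pos
  have hN := hD.crNorm_nonneg hr
  rw [hD.epsTay_eq_sub hr hf]
  rcases le_or_gt (St.ν y) (St.q⁻¹ ^ h) with hy | hy
  · have hconst : f (x + y) = f x :=
      hf (by rw [add_sub_cancel_left]; exact Setting.pow_ϖ_dvd_iff.2 hy)
    rw [hconst, sub_self, norm_zero, zero_div]
    positivity
  · have hle : ‖f (x + y) - f x‖ ≤ 2 * CrNorm St r f D := by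
      linarith [norm_sub_le (f (x + y)) (f x), hD.norm_le_crNorm hr (x + y),
        hD.norm_le_crNorm hr x]
    gcongr

theorem norm_epsTay_div_le_crNorm (hD : IsCrWith St r f D) (hr : 0 ≤ r)
    (hf : IsConstModPow St h f) (x y : O) :
    ‖epsTay St ⌊r⌋₊ f D x y‖ / St.ν y ^ r ≤ CrNorm St r f D := by
  have hbound := hD.norm_epsTay_div_le hr hf
  calc ‖epsTay St ⌊r⌋₊ f D x y‖ / St.ν y ^ r
      ≤ ⨆ y, ‖epsTay St ⌊r⌋₊ f D x y‖ / St.ν y ^ r :=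
        le_ciSup (f := fun y => ‖epsTay St ⌊r⌋₊ f D x y‖ / St.ν y ^ r)
          ⟨_, Set.forall_mem_range.2 (hbound x)⟩ y
    _ ≤ ⨆ x, ⨆ y, ‖epsTay St ⌊r⌋₊ f D x y‖ / St.ν y ^ r :=
        le_ciSup (f := fun x => ⨆ y, ‖epsTay St ⌊r⌋₊ f D x y‖ / St.ν y ^ r)
          ⟨_, Set.forall_mem_range.2 fun x => ciSup_le (hbound x)⟩ x
    _ ≤ CrNorm St r f D := le_max_right _ _

theorem norm_sub_le_crNorm_mul (hD : IsCrWith St r f D) (hr : 0 ≤ r)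
    (hf : IsConstModPow St h f) {n : ℕ} {x y : O} (hxy : St.ϖ ^ n ∣ x - y) :
    ‖f x - f y‖ ≤ CrNorm St r f D * St.q ^ (-(r * n)) := by
  have hq := St.q_pos
  have hN := hD.crNorm_nonneg hr
  rcases le_or_gt (St.ν (x - y)) (St.q⁻¹ ^ h) with hle | hlt
  · rw [hf (Setting.pow_ϖ_dvd_iff.2 hle), sub_self, norm_zero]
    positivity
  have hν : 0 < St.ν (x - y) := lt_trans (by positivity) hlt
  have hquot := hD.norm_epsTay_div_le_crNorm hr hf y (x - y)
  rw [hD.epsTay_eq_sub hr hf, add_sub_cancel, div_le_iff₀ (Real.rpow_pos_of_pos hν r)] at hquot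
  refine hquot.trans (mul_le_mul_of_nonneg_left ?_ hN)
  calc St.ν (x - y) ^ r ≤ (St.q⁻¹ ^ n) ^ r := by
        gcongr
        exact Setting.pow_ϖ_dvd_iff.1 hxy
    _ = St.q ^ (-(r * n)) := by
        rw [← Real.rpow_natCast, Real.inv_rpow hq.le, ← Real.rpow_neg hq.le,
          ← Real.rpow_mul hq.le, neg_mul, mul_comm r]

end IsCrWith

theorem statement11_general (St : Setting S O E) (R : RepSystem St) (ρ : O →+* E)
    (hρ : ‖ρ St.ϖ‖ = St.q⁻¹) (r : ℝ) (hr : 0 ≤ r) (h : ℕ) (b : O → E) (D : (S → ℕ) → O → E)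
    (hD : IsCrWith St r (ebasisSum St R ρ r h b) D) {a : O} (ha : a ∈ R.A h) :
    ‖b a‖ ≤ CrNorm St r (ebasisSum St R ρ r h b) D * St.q ^ r := by
  rcases hla : lA St R a with _ | n
  · rw [← ebasisSum_apply_of_lA_eq_zero (ρ := ρ) (r := r) ha hla b]
    exact (hD.norm_le_crNorm hr a).trans
      (le_mul_of_one_le_right (hD.crNorm_nonneg hr) (Real.one_le_rpow St.one_lt_q.le hr))
  · obtain ⟨a', ha', hdvd⟩ := R.exists_mem_A_dvd_sub n a
    have hdiff := hD.norm_sub_le_crNorm_mul hr (isConstModPow_ebasisSum b) hdvd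
    rw [ebasisSum_sub_of_lA_eq_succ ha hla ha' hdvd, norm_mul, norm_pow, hρ] at hdiff
    exact le_mul_rpow_of_mul_inv_pow_floor_le St.one_lt_q hr (norm_nonneg _) hdiff

end CrNorm

/-- `sup_{a ∈ A_h} |b_a| ≤ ‖∑_{a ∈ A_h} b_a e_{a,0,r}‖_{C^r} · q^r`. -/
theorem statement11 (St : Setting S O E) (R : RepSystem St) (ρ : O →+* E)
    (hρ : ∀ z : O, ‖ρ z‖ = St.ν z) (r : ℝ) (hr : 0 ≤ r) (h : ℕ) (b : O → E)
    (D : (S → ℕ) → O → E)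
    (hD : IsCrWith St r (fun z => ∑ a ∈ R.A h, b a * ebasis St R ρ r a 0 z) D) :
    ∀ a ∈ R.A h, ‖b a‖ ≤
      CrNorm St r (fun z => ∑ a ∈ R.A h, b a * ebasis St R ρ r a 0 z) D * St.q ^ r :=
  fun _ ha => statement11_general St R ρ ((hρ St.ϖ).trans St.ν_ϖ) r hr h b D hD ha

end CrPaper
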